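/- arXiv:2602.08767 — 5 statements merged into one kernel-verified Lean document; each statement's English description precedes it below -/
import Mathlib

section
/- Let θ ≥ 0, Σ : ℝ² → M₂(ℝ) continuous, T > 0, v : [0,T] → ℝ² continuous, and let z be a classical solution on [0,T] of the tire PDE with input v. Define V(t) := (1/2)∫₀¹ z(ξ,t)ᵀ Q(ξ) z(ξ,t) dξ and F(t) := (𝒦₁ z(·,t)). Then for every t ∈ (0,T), V is differentiable at t and V′(t) = ∫₀¹ (θ Σ(v(t))[z(ξ,t) + (𝒦₂ z(·,t))] + (𝒜 z(·,t))(ξ))ᵀ Q(ξ) z(ξ,t) dξ + F(t)ᵀ v(t). -/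
open MeasureTheory Matrix Set

noncomputable section

attribute [local instance] Matrix.normedAddCommGroup Matrix.normedSpace

abbrev Vec2 := Fin 2 → ℝ
abbrev Mat2 := Matrix (Fin 2) (Fin 2) ℝ

/-- Nondimensional pressure distribution `p̄(ξ) = (a/(1-e^{-a})) e^{-aξ}`. -/
def pbar (a ξ : ℝ) : ℝ := a / (1 - Real.exp (-a)) * Real.exp (-a * ξ)

/-- The physical parameters of the single-track tire model. -/
structure TireParams where
  vx : ℝ
  L1 : ℝ
  L2 : ℝ
  Fz1 : ℝ
  Fz2 : ℝ
  σ1 : ℝ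
  σ2 : ℝ
  a1 : ℝ
  a2 : ℝ
  φ1 : ℝ
  φ2 : ℝ
  vx_pos : 0 < vx
  L1_pos : 0 < L1
  L2_pos : 0 < L2
  Fz1_pos : 0 < Fz1
  Fz2_pos : 0 < Fz2
  σ1_pos : 0 < σ1
  σ2_pos : 0 < σ2
  a1_pos : 0 < a1
  a2_pos : 0 < a2
  φ1_mem : φ1 ∈ Set.Ioc (0:ℝ) 1
  φ2_mem : φ2 ∈ Set.Ioc (0:ℝ) 1

namespace TireParams

variable (P : TireParams)

def ψ1 : ℝ := 1 - P.φ1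
def ψ2 : ℝ := 1 - P.φ2

def Λmat : Mat2 := Matrix.diagonal ![P.vx / P.L1, P.vx / P.L2]

def Hmat : Mat2 := (2:ℝ) • Matrix.diagonal ![P.φ1, P.φ2]

def K1 (ξ : ℝ) : Mat2 :=
  Matrix.diagonal ![P.Fz1 * P.σ1 * pbar P.a1 ξ, P.Fz2 * P.σ2 * pbar P.a2 ξ]

def K2 (ξ : ℝ) : Mat2 :=
  -Matrix.diagonal ![P.ψ1 * pbar P.a1 ξ, P.ψ2 * pbar P.a2 ξ]

def K3 (ξ : ℝ) : Mat2 :=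
  -P.vx • Matrix.diagonal ![P.ψ1 / P.L1 * deriv (pbar P.a1) ξ, P.ψ2 / P.L2 * deriv (pbar P.a2) ξ]

def K4 : Mat2 :=
  P.vx • Matrix.diagonal ![P.ψ1 / P.L1 * pbar P.a1 1, P.ψ2 / P.L2 * pbar P.a2 1]

def Q (ξ : ℝ) : Mat2 := P.K1 ξ * (P.Hmat)⁻¹

/-- `(𝒦ζ) = ∫₀¹ K(ξ) ζ(ξ) dξ`. -/
def Kop (K : ℝ → Mat2) (ζ : ℝ → Vec2) : Vec2 := ∫ ξ in (0:ℝ)..1, (K ξ).mulVec (ζ ξ)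

def K1op (ζ : ℝ → Vec2) : Vec2 := Kop P.K1 ζ

def K2op (ζ : ℝ → Vec2) : Vec2 := Kop P.K2 ζ

/-- `(𝒦₃ζ) = ∫₀¹ K₃(ξ)ζ(ξ)dξ + K₄ ζ(1)`. -/
def K3op (ζ : ℝ → Vec2) : Vec2 := Kop P.K3 ζ + (P.K4).mulVec (ζ 1)

/-- `(𝒜ζ)(ξ) = -Λ ζ'(ξ) + (𝒦₃ζ)`, expressed through a given derivative `ζ'`. -/
def Aop (ζ ζ' : ℝ → Vec2) (ξ : ℝ) : Vec2 := -(P.Λmat).mulVec (ζ' ξ) + P.K3op ζ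

end TireParams

/-- `ζ` is C¹ on `[0,1]` with derivative `ζ'`. -/
def IsC1On01 (ζ ζ' : ℝ → Vec2) : Prop :=
  (∀ ξ ∈ Icc (0:ℝ) 1, HasDerivWithinAt ζ (ζ' ξ) (Icc (0:ℝ) 1) ξ) ∧
    ContinuousOn ζ' (Icc (0:ℝ) 1)

/-- Square integrability on `(0,1)`. -/
def SqIntegrableOn01 (ζ : ℝ → Vec2) : Prop :=
  Measurable ζ ∧ IntervalIntegrable (fun ξ => ∑ i, (ζ ξ i) ^ 2) volume 0 1

/-- Assumption 1 (strict dissipativity of `𝒜`). -/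
def Assumption1 (P : TireParams) (ω : ℝ) : Prop :=
  ∀ ζ ζ' : ℝ → Vec2, IsC1On01 ζ ζ' → ζ 0 = 0 →
    (∫ ξ in (0:ℝ)..1, P.Aop ζ ζ' ξ ⬝ᵥ (P.Q ξ).mulVec (ζ ξ)) ≤
      -ω * ∫ ξ in (0:ℝ)..1, ∑ i, (ζ ξ i) ^ 2

/-- Assumption 2 (dissipativity of the source `Σ`). -/
def Assumption2 (P : TireParams) (S : Vec2 → Mat2) : Prop :=
  ∀ y : Vec2, ∀ ζ : ℝ → Vec2, SqIntegrableOn01 ζ →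
    (∫ ξ in (0:ℝ)..1, ζ ξ ⬝ᵥ (P.Q ξ).mulVec ((S y).mulVec (ζ ξ + P.K2op ζ))) ≤ 0

/-- `z` (with partial derivatives `zξ`, `zt`) is a classical solution on `[0,T]` of the tire
PDE with input `v`: `∂z/∂t + Λ ∂z/∂ξ = θΣ(v(t))[z + 𝒦₂z] + 𝒦₃z + Hv(t)`, `z(0,t) = 0`. -/
def IsClassicalSolution (P : TireParams) (θ : ℝ) (S : Vec2 → Mat2) (T : ℝ)
    (v : ℝ → Vec2) (z zξ zt : ℝ → ℝ → Vec2) : Prop :=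
  (∀ t ∈ Icc (0:ℝ) T, ∀ ξ ∈ Icc (0:ℝ) 1,
      HasDerivWithinAt (fun s => z s t) (zξ ξ t) (Icc (0:ℝ) 1) ξ) ∧
  (∀ ξ ∈ Icc (0:ℝ) 1, ∀ t ∈ Icc (0:ℝ) T,
      HasDerivWithinAt (fun s => z ξ s) (zt ξ t) (Icc (0:ℝ) T) t) ∧
  ContinuousOn (fun p : ℝ × ℝ => z p.1 p.2) (Icc (0:ℝ) 1 ×ˢ Icc (0:ℝ) T) ∧
  ContinuousOn (fun p : ℝ × ℝ => zξ p.1 p.2) (Icc (0:ℝ) 1 ×ˢ Icc (0:ℝ) T) ∧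
  ContinuousOn (fun p : ℝ × ℝ => zt p.1 p.2) (Icc (0:ℝ) 1 ×ˢ Icc (0:ℝ) T) ∧
  (∀ ξ ∈ Ioo (0:ℝ) 1, ∀ t ∈ Ioo (0:ℝ) T,
      zt ξ t + (P.Λmat).mulVec (zξ ξ t) =
        θ • (S (v t)).mulVec (z ξ t + P.K2op (fun s => z s t)) +
          P.K3op (fun s => z s t) + (P.Hmat).mulVec (v t)) ∧
  (∀ t ∈ Icc (0:ℝ) T, z 0 t = 0)

/-- The storage function `V(t) = ½∫₀¹ z(ξ,t)ᵀ Q(ξ) z(ξ,t) dξ`. -/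
def storage (P : TireParams) (z : ℝ → ℝ → Vec2) (t : ℝ) : ℝ :=
  (1/2) * ∫ ξ in (0:ℝ)..1, z ξ t ⬝ᵥ (P.Q ξ).mulVec (z ξ t)

/-- The output `F(t) = (𝒦₁ z(·,t))`. -/
def outputF (P : TireParams) (z : ℝ → ℝ → Vec2) (t : ℝ) : Vec2 :=
  P.K1op (fun s => z s t)


lemma pbar_cont (a : ℝ) : Continuous (pbar a) := by
  unfold pbar; fun_prop

def qq1 (P : TireParams) (ξ : ℝ) : ℝ := P.Fz1 * P.σ1 * pbar P.a1 ξ / (2 * P.φ1)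
def qq2 (P : TireParams) (ξ : ℝ) : ℝ := P.Fz2 * P.σ2 * pbar P.a2 ξ / (2 * P.φ2)

lemma qq1_cont (P : TireParams) : Continuous (qq1 P) := by
  have := pbar_cont P.a1
  unfold qq1; fun_prop

lemma qq2_cont (P : TireParams) : Continuous (qq2 P) := by
  have := pbar_cont P.a2
  unfold qq2; fun_prop

lemma Hmat_inv (P : TireParams) :
    (P.Hmat)⁻¹ = Matrix.diagonal ![1 / (2 * P.φ1), 1 / (2 * P.φ2)] := by
  have h1 := P.φ1_mem.1.ne'
  have h2 := P.φ2_mem.1.ne'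
  apply Matrix.inv_eq_right_inv
  ext i j
  fin_cases i <;> fin_cases j <;> simp [TireParams.Hmat] <;> field_simp

lemma dot_Q (P : TireParams) (ξ : ℝ) (u w : Vec2) :
    u ⬝ᵥ (P.Q ξ).mulVec w = qq1 P ξ * (u 0 * w 0) + qq2 P ξ * (u 1 * w 1) := by
  unfold TireParams.Q
  rw [Hmat_inv]
  simp [TireParams.K1, dotProduct, Fin.sum_univ_two, Matrix.mulVec_diagonal, qq1, qq2]
  ring

lemma dot_HQ (P : TireParams) (ξ : ℝ) (u w : Vec2) :
    (P.Hmat).mulVec u ⬝ᵥ (P.Q ξ).mulVec w = (P.K1 ξ).mulVec w ⬝ᵥ u := by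
  have h1 := P.φ1_mem.1.ne'
  have h2 := P.φ2_mem.1.ne'
  rw [dot_Q]
  simp [TireParams.K1, TireParams.Hmat, dotProduct, Fin.sum_univ_two, Matrix.mulVec_diagonal,
    Matrix.smul_mulVec, qq1, qq2]
  field_simp

lemma K1_cont (P : TireParams) : Continuous P.K1 := by
  have h1 := pbar_cont P.a1
  have h2 := pbar_cont P.a2
  unfold TireParams.K1
  apply Continuous.matrix_diagonal
  apply continuous_pi
  intro i
  fin_cases i <;> simp <;> fun_prop

theorem statement1 (P : TireParams) (θ : ℝ) (hθ : 0 ≤ θ)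
    (S : Vec2 → Mat2) (hS : Continuous S)
    (T : ℝ) (hT : 0 < T) (v : ℝ → Vec2) (hv : ContinuousOn v (Icc (0:ℝ) T))
    (z zξ zt : ℝ → ℝ → Vec2) (hz : IsClassicalSolution P θ S T v z zξ zt) :
    ∀ t ∈ Ioo (0:ℝ) T,
      HasDerivAt (storage P z)
        ((∫ ξ in (0:ℝ)..1,
            (θ • (S (v t)).mulVec (z ξ t + P.K2op (fun s => z s t)) +
                P.Aop (fun s => z s t) (fun s => zξ s t) ξ) ⬝ᵥ (P.Q ξ).mulVec (z ξ t)) +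
          outputF P z t ⬝ᵥ v t) t := by
  obtain ⟨-, hdt, hzc, -, hztc, hpde, -⟩ := hz
  intro t ht
  have htI : t ∈ Icc (0:ℝ) T := Ioo_subset_Icc_self ht
  have slice : ∀ {f : ℝ → ℝ → Vec2},
      ContinuousOn (fun p : ℝ × ℝ => f p.1 p.2) (Icc (0:ℝ) 1 ×ˢ Icc (0:ℝ) T) →
      ∀ s ∈ Icc (0:ℝ) T, ContinuousOn (fun ξ => f ξ s) (Icc (0:ℝ) 1) := by
    intro f hf s hs
    exact hf.comp (f := fun ξ : ℝ => (ξ, s)) (by fun_prop) (fun ξ hξ => ⟨hξ, hs⟩)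
  have hq1 := qq1_cont P
  have hq2 := qq2_cont P
  have hzi : ∀ i : Fin 2, ContinuousOn (fun p : ℝ × ℝ => z p.1 p.2 i)
      (Icc (0:ℝ) 1 ×ˢ Icc (0:ℝ) T) := fun i => (continuousOn_pi.1 hzc) i
  have hzti : ∀ i : Fin 2, ContinuousOn (fun p : ℝ × ℝ => zt p.1 p.2 i)
      (Icc (0:ℝ) 1 ×ˢ Icc (0:ℝ) T) := fun i => (continuousOn_pi.1 hztc) i
  have hFdc : ContinuousOn (fun p : ℝ × ℝ => zt p.1 p.2 ⬝ᵥ (P.Q p.1).mulVec (z p.1 p.2))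
      (Icc (0:ℝ) 1 ×ˢ Icc (0:ℝ) T) := by
    simp only [dot_Q]
    have a0 := hzi 0
    have a1 := hzi 1
    have b0 := hzti 0
    have b1 := hzti 1
    have c1 : Continuous (fun p : ℝ × ℝ => qq1 P p.1) := by fun_prop
    have c2 : Continuous (fun p : ℝ × ℝ => qq2 P p.1) := by fun_prop
    exact (c1.continuousOn.mul (b0.mul a0)).add (c2.continuousOn.mul (b1.mul a1))
  have hFc : ContinuousOn
      (fun p : ℝ × ℝ => (1/2) * (z p.1 p.2 ⬝ᵥ (P.Q p.1).mulVec (z p.1 p.2)))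
      (Icc (0:ℝ) 1 ×ˢ Icc (0:ℝ) T) := by
    simp only [dot_Q]
    have a0 := hzi 0
    have a1 := hzi 1
    have c1 : Continuous (fun p : ℝ × ℝ => qq1 P p.1) := by fun_prop
    have c2 : Continuous (fun p : ℝ × ℝ => qq2 P p.1) := by fun_prop
    exact continuousOn_const.mul
      ((c1.continuousOn.mul (a0.mul a0)).add (c2.continuousOn.mul (a1.mul a1)))
  have sliceR : ∀ {f : ℝ → ℝ → ℝ},
      ContinuousOn (fun p : ℝ × ℝ => f p.1 p.2) (Icc (0:ℝ) 1 ×ˢ Icc (0:ℝ) T) →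
      ∀ s ∈ Icc (0:ℝ) T, IntervalIntegrable (fun ξ => f ξ s) volume 0 1 := by
    intro f hf s hs
    apply ContinuousOn.intervalIntegrable
    rw [uIcc_of_le zero_le_one]
    exact hf.comp (f := fun ξ : ℝ => (ξ, s)) (by fun_prop) (fun ξ hξ => ⟨hξ, hs⟩)
  have hFint := sliceR (f := fun ξ s => (1/2) * (z ξ s ⬝ᵥ (P.Q ξ).mulVec (z ξ s))) hFc
  have hFdint := sliceR (f := fun ξ s => zt ξ s ⬝ᵥ (P.Q ξ).mulVec (z ξ s)) hFdc
  obtain ⟨C, hC⟩ := (isCompact_Icc.prod isCompact_Icc).exists_bound_of_continuousOn hFdc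
  have hU : Ioo (0:ℝ) T ∈ nhds t := isOpen_Ioo.mem_nhds ht
  have hIoc : uIoc (0:ℝ) 1 ⊆ Icc (0:ℝ) 1 := by
    rw [uIoc_of_le zero_le_one]; exact Ioc_subset_Icc_self
  have key := (intervalIntegral.hasDerivAt_integral_of_dominated_loc_of_deriv_le
    (μ := volume) (a := 0) (b := 1) (x₀ := t) (s := Ioo (0:ℝ) T)
    (F := fun s ξ => (1/2) * (z ξ s ⬝ᵥ (P.Q ξ).mulVec (z ξ s)))
    (F' := fun s ξ => zt ξ s ⬝ᵥ (P.Q ξ).mulVec (z ξ s)) (bound := fun _ => C)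
    hU
    (by
      filter_upwards [hU] with s hs
      have := (intervalIntegrable_iff.1 (hFint s (Ioo_subset_Icc_self hs))).aestronglyMeasurable
      exact this)
    (hFint t htI)
    (intervalIntegrable_iff.1 (hFdint t htI)).aestronglyMeasurable
    (Filter.Eventually.of_forall fun ξ hξ s hs =>
      hC (ξ, s) ⟨hIoc hξ, Ioo_subset_Icc_self hs⟩)
    intervalIntegrable_const
    (Filter.Eventually.of_forall fun ξ hξ s hs => by
      have h := (hdt ξ (hIoc hξ) s (Ioo_subset_Icc_self hs)).hasDerivAt
        (Icc_mem_nhds hs.1 hs.2)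
      have h0 := (hasDerivAt_pi.1 h) 0
      have h1 := (hasDerivAt_pi.1 h) 1
      simp only [dot_Q]
      have := (((h0.mul h0).const_mul (qq1 P ξ)).add
        ((h1.mul h1).const_mul (qq2 P ξ))).const_mul (1/2)
      refine this.congr_deriv ?_
      ring)).2
  have hK1z : IntervalIntegrable (fun ξ => (P.K1 ξ).mulVec (z ξ t)) volume 0 1 := by
    apply ContinuousOn.intervalIntegrable
    rw [uIcc_of_le zero_le_one]
    have h1 := K1_cont P
    have h2 := slice hzc t htI
    rw [continuousOn_pi]
    intro i
    have := pbar_cont P.a1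
    have := pbar_cont P.a2
    have h3 := (continuousOn_pi.1 h2) i
    simp only [TireParams.K1, Matrix.mulVec_diagonal]
    refine ContinuousOn.mul ?_ h3
    fin_cases i <;> simp <;> fun_prop
  let Lv : Vec2 →L[ℝ] ℝ := LinearMap.toContinuousLinearMap
    { toFun := fun w => w ⬝ᵥ v t
      map_add' := fun a b => add_dotProduct a b _
      map_smul' := fun c a => smul_dotProduct c a _ }
  have hout : outputF P z t ⬝ᵥ v t = ∫ ξ in (0:ℝ)..1, (P.K1 ξ).mulVec (z ξ t) ⬝ᵥ v t :=
    (Lv.intervalIntegral_comp_comm hK1z).symm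
  have hKv : IntervalIntegrable (fun ξ => (P.K1 ξ).mulVec (z ξ t) ⬝ᵥ v t) volume 0 1 :=
    ⟨Lv.integrable_comp hK1z.1, Lv.integrable_comp hK1z.2⟩
  have hst : storage P z = fun s => ∫ ξ in (0:ℝ)..1,
      (1/2) * (z ξ s ⬝ᵥ (P.Q ξ).mulVec (z ξ s)) := by
    funext s
    rw [intervalIntegral.integral_const_mul]
    rfl
  rw [hst]
  refine key.congr_deriv ?_
  rw [hout, ← sub_eq_iff_eq_add, ← intervalIntegral.integral_sub (hFdint t htI) hKv,
    intervalIntegral.integral_of_le zero_le_one, intervalIntegral.integral_of_le zero_le_one,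
    integral_Ioc_eq_integral_Ioo, integral_Ioc_eq_integral_Ioo]
  refine setIntegral_congr_fun measurableSet_Ioo fun ξ hξ => ?_
  have h := eq_sub_of_add_eq (hpde ξ hξ t ht)
  rw [h, ← dot_HQ, ← sub_dotProduct]
  congr 1
  unfold TireParams.Aop
  abel
end
end

section
/- Let θ ≥ 0, ε ≥ 0, μ_min > 0, and μ₁, μ₂ : ℝ → [μ_min, ∞) continuous, and define Σ(y) := diag(−σ₁ √(y₁² + ε)/μ₁(y₁), −σ₂ √(y₂² + ε)/μ₂(y₂)) for y = (y₁, y₂) ∈ ℝ². Suppose Assumption 1 holds with constant ω > 0 and Assumption 2 holds for Σ. Then for every y ∈ ℝ² there exists a unique pair (M, N) with M ∈ C¹([0,1]; M₂(ℝ)) and N ∈ M₂(ℝ) such that: (a) Λ M′(ξ) = θ Σ(y)(M(ξ) + ∫₀¹ K₂(s)M(s) ds) + ∫₀¹ K₃(s)M(s) ds + K₄ M(1) + H N for all ξ ∈ (0,1); (b) M(0) = 0; and (c) the normalization ∫₀¹ K₁(ξ) M(ξ) dξ = I₂ holds. -/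
open MeasureTheory Matrix Set

noncomputable section

attribute [local instance] Matrix.normedAddCommGroup Matrix.normedSpace

/-- Matrix-valued `M` is C¹ on `[0,1]` with derivative `M'`. -/
def IsC1MatOn01 (M M' : ℝ → Mat2) : Prop :=
  (∀ ξ ∈ Icc (0:ℝ) 1, HasDerivWithinAt M (M' ξ) (Icc (0:ℝ) 1) ξ) ∧
    ContinuousOn M' (Icc (0:ℝ) 1)

/-- The tire friction source matrix
`Σ(y) = diag(−σ₁√(y₁²+ε)/μ₁(y₁), −σ₂√(y₂²+ε)/μ₂(y₂))`. -/
def Stire (σ1 σ2 ε : ℝ) (μ1 μ2 : ℝ → ℝ) (y : Vec2) : Mat2 :=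
  Matrix.diagonal ![-(σ1 * Real.sqrt ((y 0) ^ 2 + ε) / μ1 (y 0)),
                    -(σ2 * Real.sqrt ((y 1) ^ 2 + ε) / μ2 (y 1))]

/-- Right-hand side of the nonlocal matrix ODE
`ΛM'(ξ) = θΣ(y)(M(ξ) + ∫₀¹K₂M) + ∫₀¹K₃M + K₄M(1) + HN`. -/
def matODE_RHS (P : TireParams) (θ : ℝ) (Sy : Mat2) (M : ℝ → Mat2) (N : Mat2) (ξ : ℝ) : Mat2 :=
  θ • (Sy * (M ξ + ∫ s in (0:ℝ)..1, P.K2 s * M s)) +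
    (∫ s in (0:ℝ)..1, P.K3 s * M s) + P.K4 * M 1 + P.Hmat * N

lemma pbar_hasDerivAt (a x : ℝ) : HasDerivAt (pbar a) (-a * pbar a x) x := by
  unfold pbar
  have h : HasDerivAt (fun x : ℝ => -a * x) (-a) x := by
    simpa using (hasDerivAt_id x).const_mul (-a)
  exact (h.exp.const_mul (a / (1 - Real.exp (-a)))).congr_deriv (by ring)

lemma pbar_deriv (a : ℝ) : deriv (pbar a) = fun x => -a * pbar a x :=
  funext fun x => (pbar_hasDerivAt a x).deriv

lemma pbar_pos {a : ℝ} (ha : 0 < a) (x : ℝ) : 0 < pbar a x := by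
  unfold pbar
  have : Real.exp (-a) < 1 := by rw [Real.exp_lt_one_iff]; linarith
  have : 0 < 1 - Real.exp (-a) := by linarith
  positivity

lemma pbar_int {a : ℝ} (ha : 0 < a) : ∫ x in (0:ℝ)..1, pbar a x = 1 := by
  have hlt : Real.exp (-a) < 1 := by rw [Real.exp_lt_one_iff]; linarith
  have hne : 1 - Real.exp (-a) ≠ 0 := by linarith
  have h := intervalIntegral.integral_eq_sub_of_hasDerivAt (a := 0) (b := 1)
    (f := fun x => -(1 / a) * pbar a x) (f' := pbar a)
    (fun x _ => by
      have := (pbar_hasDerivAt a x).const_mul (-(1 / a))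
      exact this.congr_deriv (by field_simp))
    ((pbar_cont a).intervalIntegrable _ _)
  rw [h]
  simp only [pbar, mul_zero, mul_one, Real.exp_zero]
  field_simp
  ring

/-- scalar profile -/
def gsol (r lam ξ : ℝ) : ℝ := Real.exp (-r * ξ) * ((∫ t in (0:ℝ)..ξ, Real.exp (r * t)) / lam)

lemma gsol_hasDerivAt (r lam x : ℝ) :
    HasDerivAt (gsol r lam) (-r * gsol r lam x + 1 / lam) x := by
  unfold gsol
  have h : HasDerivAt (fun x : ℝ => -r * x) (-r) x := by
    simpa using (hasDerivAt_id x).const_mul (-r)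
  have hc : Continuous (fun t : ℝ => Real.exp (r * t)) := by fun_prop
  have h2 : HasDerivAt (fun ξ => ∫ t in (0:ℝ)..ξ, Real.exp (r * t)) (Real.exp (r * x)) x :=
    intervalIntegral.integral_hasDerivAt_right (hc.intervalIntegrable _ _)
      hc.aestronglyMeasurable.stronglyMeasurableAtFilter hc.continuousAt
  refine (h.exp.mul (h2.div_const lam)).congr_deriv ?_
  have : Real.exp (-r * x) * (Real.exp (r * x) / lam) = 1 / lam := by
    rw [← mul_div_assoc, ← Real.exp_add]; simp
  rw [this]; ring

lemma gsol_cont (r lam : ℝ) : Continuous (gsol r lam) :=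
  continuous_iff_continuousAt.2 fun x => (gsol_hasDerivAt r lam x).continuousAt

lemma gsol_zero (r lam : ℝ) : gsol r lam 0 = 0 := by simp [gsol]

lemma gsol_pos (r : ℝ) {lam x : ℝ} (hl : 0 < lam) (hx : 0 < x) : 0 < gsol r lam x := by
  unfold gsol
  have hc : Continuous (fun t : ℝ => Real.exp (r * t)) := by fun_prop
  have : 0 < ∫ t in (0:ℝ)..x, Real.exp (r * t) :=
    intervalIntegral.intervalIntegral_pos_of_pos (hc.intervalIntegrable _ _)
      (fun t => Real.exp_pos _) hx
  positivity

lemma pg_pos {a lam : ℝ} (r : ℝ) (ha : 0 < a) (hl : 0 < lam) :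
    0 < ∫ x in (0:ℝ)..1, pbar a x * gsol r lam x := by
  refine intervalIntegral.intervalIntegral_pos_of_pos_on
    (((pbar_cont a).mul (gsol_cont r lam)).intervalIntegrable _ _) ?_ one_pos
  intro x hx
  exact mul_pos (pbar_pos ha x) (gsol_pos r hl hx.1)

/-- scalar right-hand side -/
def sRHS (v L a φ S θ : ℝ) (m : ℝ → ℝ) (n ξ : ℝ) : ℝ :=
  θ * (S * (m ξ + ∫ s in (0:ℝ)..1, -((1 - φ) * pbar a s) * m s)) +
    (∫ s in (0:ℝ)..1, (-v * ((1 - φ) / L * deriv (pbar a) s)) * m s) +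
    (v * ((1 - φ) / L * pbar a 1)) * m 1 + 2 * φ * n

lemma sRHS_eq {v L a φ S θ : ℝ} {m m' : ℝ → ℝ} (n ξ : ℝ)
    (hm : ∀ ξ ∈ Icc (0:ℝ) 1, HasDerivWithinAt m (m' ξ) (Icc (0:ℝ) 1) ξ)
    (hm' : ContinuousOn m' (Icc (0:ℝ) 1)) (h0 : m 0 = 0) :
    sRHS v L a φ S θ m n ξ = θ * S * m ξ - (1 - φ) * (θ * S) * (∫ s in (0:ℝ)..1, pbar a s * m s)
      + (v / L) * (1 - φ) * (∫ s in (0:ℝ)..1, pbar a s * m' s) + 2 * φ * n := by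
  have hc : ContinuousOn m (Icc (0:ℝ) 1) := fun x hx => (hm x hx).continuousWithinAt
  have hu : uIcc (0:ℝ) 1 = Icc 0 1 := uIcc_of_le zero_le_one
  have hp := intervalIntegral.integral_mul_deriv_eq_deriv_mul_of_hasDeriv_right
    (a := 0) (b := 1) (u := pbar a) (v := m) (u' := deriv (pbar a)) (v' := m')
    (pbar_cont a).continuousOn (by rwa [hu])
    (fun x _ => by rw [pbar_deriv]; exact (pbar_hasDerivAt a x).hasDerivWithinAt)
    (fun x hx => by
      simp only [min_eq_left (zero_le_one' ℝ), max_eq_right (zero_le_one' ℝ)] at hx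
      exact ((hm x ⟨hx.1.le, hx.2.le⟩).hasDerivAt (Icc_mem_nhds hx.1 hx.2)).hasDerivWithinAt)
    (by rw [pbar_deriv]; exact ((pbar_cont a).const_mul _ |>.intervalIntegrable _ _))
    (ContinuousOn.intervalIntegrable (by rwa [hu]))
  rw [h0] at hp
  have e1 : (∫ s in (0:ℝ)..1, -((1 - φ) * pbar a s) * m s)
      = -(1 - φ) * ∫ s in (0:ℝ)..1, pbar a s * m s := by
    rw [← intervalIntegral.integral_const_mul]; congr 1; ext s; ring
  have e2 : (∫ s in (0:ℝ)..1, (-v * ((1 - φ) / L * deriv (pbar a) s)) * m s)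
      = -(v * (1 - φ) / L) * ∫ s in (0:ℝ)..1, deriv (pbar a) s * m s := by
    rw [← intervalIntegral.integral_const_mul]; congr 1; ext s; ring
  rw [sRHS, e1, e2, hp]
  ring

lemma scalar_exists {v L a φ S θ : ℝ} (hv : 0 < v) (hL : 0 < L) (ha : 0 < a) (n ξ : ℝ) :
    v / L * (2 * n * (-(-(θ * S) / (v / L)) * gsol (-(θ * S) / (v / L)) (v / L) ξ + 1 / (v / L))) =
      sRHS v L a φ S θ (fun x => 2 * n * gsol (-(θ * S) / (v / L)) (v / L) x) n ξ := by
  have hl : v / L ≠ 0 := (div_pos hv hL).ne'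
  generalize hlam : v / L = lam at *
  set r := -(θ * S) / lam with hr
  have hrl : θ * S = -(r * lam) := by rw [hr]; field_simp
  have hg := gsol_cont r lam
  have hp := pbar_cont a
  have key := sRHS_eq (v := v) (L := L) (a := a) (φ := φ) (S := S) (θ := θ)
    (m := fun x => 2 * n * gsol r lam x)
    (m' := fun x => 2 * n * (-r * gsol r lam x + 1 / lam)) n ξ
    (fun x _ => ((gsol_hasDerivAt r lam x).const_mul (2 * n)).hasDerivWithinAt)
    (by fun_prop) (by simp [gsol_zero])
  rw [key, hlam, hrl]
  have e1 : (∫ s in (0:ℝ)..1, pbar a s * (2 * n * gsol r lam s))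
      = 2 * n * ∫ s in (0:ℝ)..1, pbar a s * gsol r lam s := by
    rw [← intervalIntegral.integral_const_mul]; congr 1; ext s; ring
  have e2 : (∫ s in (0:ℝ)..1, pbar a s * (2 * n * (-r * gsol r lam s + 1 / lam)))
      = -(2 * n * r) * (∫ s in (0:ℝ)..1, pbar a s * gsol r lam s) + 2 * n / lam := by
    have : (2 * n / lam) = (2 * n / lam) * ∫ s in (0:ℝ)..1, pbar a s := by
      rw [pbar_int ha, mul_one]
    rw [this, ← intervalIntegral.integral_const_mul, ← intervalIntegral.integral_const_mul,
      ← intervalIntegral.integral_add (Continuous.intervalIntegrable (by fun_prop) _ _)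
        (hp.const_mul _ |>.intervalIntegrable _ _)]
    congr 1; ext s; ring
  rw [e1, e2]
  field_simp
  ring

lemma scalar_unique {v L a φ S θ : ℝ} (hv : 0 < v) (hL : 0 < L) (ha : 0 < a) (hφ : φ ≠ 0)
    {m m' : ℝ → ℝ} {n : ℝ}
    (hm : ∀ ξ ∈ Icc (0:ℝ) 1, HasDerivWithinAt m (m' ξ) (Icc (0:ℝ) 1) ξ)
    (hm' : ContinuousOn m' (Icc (0:ℝ) 1)) (h0 : m 0 = 0)
    (hode : ∀ ξ ∈ Ioo (0:ℝ) 1, v / L * m' ξ = sRHS v L a φ S θ m n ξ) :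
    ∀ ξ ∈ Icc (0:ℝ) 1, m ξ = 2 * n * gsol (-(θ * S) / (v / L)) (v / L) ξ := by
  have hl : v / L ≠ 0 := (div_pos hv hL).ne'
  have hc : ContinuousOn m (Icc (0:ℝ) 1) := fun x hx => (hm x hx).continuousWithinAt
  have hu : uIcc (0:ℝ) 1 = Icc 0 1 := uIcc_of_le zero_le_one
  have hp := pbar_cont a
  have hode2 := fun ξ hξ => (hode ξ hξ).trans (sRHS_eq n ξ hm hm' h0)
  generalize hlam : v / L = lam at *
  set r := -(θ * S) / lam with hr
  have hrl : θ * S = -(r * lam) := by rw [hr]; field_simp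
  rw [hrl] at hode2
  set I := ∫ s in (0:ℝ)..1, pbar a s * m s with hI
  set J := ∫ s in (0:ℝ)..1, pbar a s * m' s with hJ
  set C := (1 - φ) * (r * lam) * I + lam * (1 - φ) * J + 2 * φ * n with hC
  have hode3 : ∀ ξ ∈ Ioo (0:ℝ) 1, lam * m' ξ = -(r * lam) * m ξ + C := by
    intro ξ hξ; rw [hode2 ξ hξ, hC]; ring
  have iI : IntervalIntegrable (fun s => pbar a s * m s) volume 0 1 :=
    ContinuousOn.intervalIntegrable (by rw [hu]; exact hp.continuousOn.mul hc)
  have hJe : lam * J = -(r * lam) * I + C := by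
    have : C = C * ∫ s in (0:ℝ)..1, pbar a s := by rw [pbar_int ha, mul_one]
    rw [this, hI, hJ, ← intervalIntegral.integral_const_mul, ← intervalIntegral.integral_const_mul,
      ← intervalIntegral.integral_const_mul, ← intervalIntegral.integral_add (iI.const_mul _)
        (hp.const_mul _ |>.intervalIntegrable _ _)]
    rw [intervalIntegral.integral_of_le zero_le_one, intervalIntegral.integral_of_le zero_le_one,
      integral_Ioc_eq_integral_Ioo, integral_Ioc_eq_integral_Ioo]
    refine setIntegral_congr_fun measurableSet_Ioo fun x hx => ?_
    linear_combination pbar a x * hode3 x hx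
  have hCn : C = 2 * n := by
    have : φ * C = φ * (2 * n) := by linear_combination hC + (1 - φ) * hJe
    exact mul_left_cancel₀ hφ this
  rw [hCn] at hode3
  intro ξ hξ
  rcases hξ.1.eq_or_lt with h | h
  · rw [← h, h0, gsol_zero, mul_zero]
  have hE : ∀ x : ℝ, HasDerivAt (fun x : ℝ => Real.exp (r * x)) (Real.exp (r * x) * r) x := by
    intro x
    have h : HasDerivAt (fun x : ℝ => r * x) r x := by
      simpa using (hasDerivAt_id x).const_mul r
    exact h.exp
  have hEc : Continuous (fun x : ℝ => Real.exp (r * x)) := by fun_prop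
  obtain ⟨c, hcm, hce⟩ := exists_hasDerivAt_eq_slope
    (fun x => Real.exp (r * x) * (m x - 2 * n * gsol r lam x)) (fun _ => 0) h
    (hEc.continuousOn.mul ((hc.mono (Icc_subset_Icc_right hξ.2)).sub
      ((gsol_cont r lam).const_mul _).continuousOn))
    (fun x hx => by
      have hx1 : x < 1 := hx.2.trans_le hξ.2
      have hmx := (hm x ⟨hx.1.le, hx1.le⟩).hasDerivAt (Icc_mem_nhds hx.1 hx1)
      refine ((hE x).mul (hmx.sub ((gsol_hasDerivAt r lam x).const_mul (2 * n)))).congr_deriv ?_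
      have : m' x = -r * m x + 2 * n / lam := by
        have := hode3 x ⟨hx.1, hx1⟩
        field_simp
        linear_combination this
      simp only [Pi.sub_apply]
      rw [this]; ring)
  rw [eq_div_iff (by linarith), h0, gsol_zero] at hce
  simp only [zero_mul, mul_zero, sub_zero] at hce
  have := (mul_eq_zero.1 hce.symm).resolve_left (Real.exp_pos _).ne'
  linarith

lemma pi_entry (F : ℝ → Fin 2 → Fin 2 → ℝ) (hF : ContinuousOn F (Icc (0:ℝ) 1)) (i j : Fin 2) :
    (∫ s in (0:ℝ)..1, F s) i j = ∫ s in (0:ℝ)..1, F s i j := by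
  have hi : IntervalIntegrable F volume 0 1 :=
    ContinuousOn.intervalIntegrable (by rwa [uIcc_of_le zero_le_one])
  let E : (Fin 2 → Fin 2 → ℝ) →L[ℝ] ℝ :=
    (ContinuousLinearMap.proj (R := ℝ) (φ := fun _ : Fin 2 => ℝ) j).comp
      (ContinuousLinearMap.proj (R := ℝ) (φ := fun _ : Fin 2 => Fin 2 → ℝ) i)
  exact (E.intervalIntegral_comp_comm hi).symm

lemma mat_entry (F : ℝ → Mat2) (hF : ContinuousOn F (Icc (0:ℝ) 1)) (i j : Fin 2) :
    (∫ s in (0:ℝ)..1, F s) i j = ∫ s in (0:ℝ)..1, F s i j := by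
  exact pi_entry F hF i j

namespace TireParams
variable (P : TireParams)
def Li : Fin 2 → ℝ := ![P.L1, P.L2]
def ai : Fin 2 → ℝ := ![P.a1, P.a2]
def fi : Fin 2 → ℝ := ![P.φ1, P.φ2]
def ki : Fin 2 → ℝ := ![P.Fz1 * P.σ1, P.Fz2 * P.σ2]
lemma Li_pos (i : Fin 2) : 0 < P.Li i := by
  fin_cases i <;> simp [Li, P.L1_pos, P.L2_pos]
lemma ai_pos (i : Fin 2) : 0 < P.ai i := by
  fin_cases i <;> simp [ai, P.a1_pos, P.a2_pos]
lemma fi_pos (i : Fin 2) : 0 < P.fi i := by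
  fin_cases i <;> simp [fi, P.φ1_mem.1, P.φ2_mem.1]
lemma ki_pos (i : Fin 2) : 0 < P.ki i := by
  have h1 := mul_pos P.Fz1_pos P.σ1_pos
  have h2 := mul_pos P.Fz2_pos P.σ2_pos
  fin_cases i <;> simp [ki, h1, h2]

lemma K1_eq (x : ℝ) : P.K1 x = Matrix.diagonal (fun i => P.ki i * pbar (P.ai i) x) := by
  rw [K1]; congr 1; ext i; fin_cases i <;> simp [ki, ai]
lemma K2_eq (x : ℝ) : P.K2 x = Matrix.diagonal (fun i => -((1 - P.fi i) * pbar (P.ai i) x)) := by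
  rw [K2, Matrix.diagonal_neg]; congr 1; ext i; fin_cases i <;> simp [fi, ai, ψ1, ψ2]
lemma K3_eq (x : ℝ) : P.K3 x =
    Matrix.diagonal (fun i => -P.vx * ((1 - P.fi i) / P.Li i * deriv (pbar (P.ai i)) x)) := by
  rw [K3, ← Matrix.diagonal_smul]; congr 1; ext i; fin_cases i <;> simp [fi, ai, Li, ψ1, ψ2]
lemma K4_eq : P.K4 =
    Matrix.diagonal (fun i => P.vx * ((1 - P.fi i) / P.Li i * pbar (P.ai i) 1)) := by
  rw [K4, ← Matrix.diagonal_smul]; congr 1; ext i; fin_cases i <;> simp [fi, ai, Li, ψ1, ψ2]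
lemma Λ_eq : P.Λmat = Matrix.diagonal (fun i => P.vx / P.Li i) := by
  rw [Λmat]; congr 1; ext i; fin_cases i <;> simp [Li]
lemma H_eq : P.Hmat = Matrix.diagonal (fun i => 2 * P.fi i) := by
  rw [Hmat, ← Matrix.diagonal_smul]
  congr 1
end TireParams

lemma cont_diag_mul {d : ℝ → Fin 2 → ℝ} (hd : ∀ i, Continuous fun x => d x i) {M : ℝ → Mat2}
    (hM : ContinuousOn M (Icc (0:ℝ) 1)) :
    ContinuousOn (fun x => Matrix.diagonal (d x) * M x) (Icc (0:ℝ) 1) := by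
  have : Continuous fun x => (Matrix.diagonal (d x) : Mat2) :=
    (continuous_pi hd).matrix_diagonal
  rw [continuousOn_iff_continuous_restrict] at hM ⊢
  exact (this.comp continuous_subtype_val).matrix_mul hM

lemma K1_entry (P : TireParams) {M : ℝ → Mat2} (hM : ContinuousOn M (Icc (0:ℝ) 1)) (i j : Fin 2) :
    (∫ s in (0:ℝ)..1, P.K1 s * M s) i j =
      P.ki i * ∫ s in (0:ℝ)..1, pbar (P.ai i) s * M s i j := by
  simp only [P.K1_eq]
  rw [mat_entry _ (cont_diag_mul (fun i => (pbar_cont _).const_mul _) hM),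
    ← intervalIntegral.integral_const_mul]
  simp only [Matrix.diagonal_mul, mul_assoc]

lemma RHS_entry (P : TireParams) (θ : ℝ) (S : Fin 2 → ℝ) {M : ℝ → Mat2} (N : Mat2) (ξ : ℝ)
    (hM : ContinuousOn M (Icc (0:ℝ) 1)) (i j : Fin 2) :
    matODE_RHS P θ (Matrix.diagonal S) M N ξ i j =
      sRHS P.vx (P.Li i) (P.ai i) (P.fi i) (S i) θ (fun x => M x i j) (N i j) ξ := by
  simp only [matODE_RHS, P.K2_eq, P.K3_eq, P.K4_eq, P.H_eq]
  simp only [Matrix.add_apply, Matrix.smul_apply, Matrix.diagonal_mul, smul_eq_mul]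
  rw [mat_entry _ (cont_diag_mul (d := fun s i => -((1 - P.fi i) * pbar (P.ai i) s))
      (fun i => ((pbar_cont _).const_mul _).neg) hM),
    mat_entry _ (cont_diag_mul
      (d := fun s i => -P.vx * ((1 - P.fi i) / P.Li i * deriv (pbar (P.ai i)) s)) (fun i => by
      rw [pbar_deriv]
      exact (((pbar_cont _).const_mul _).const_mul _).const_mul _) hM)]
  simp only [Matrix.diagonal_mul, sRHS]

lemma mat_deriv {M : ℝ → Mat2} {D : Mat2} {s : Set ℝ} {x : ℝ} :
    HasDerivWithinAt M D s x ↔ ∀ i j, HasDerivWithinAt (fun x => M x i j) (D i j) s x :=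
  (hasDerivWithinAt_pi (φ := M) (φ' := D)).trans
    (forall_congr' fun i => hasDerivWithinAt_pi (φ := fun x => M x i) (φ' := D i))

/-- for every `y ∈ ℝ²` there exists a unique pair `(M,N)`, with `M` C¹ on
`[0,1]`, solving the nonlocal matrix ODE with `M(0) = 0` and normalization `∫₀¹K₁M = I₂`. -/
theorem statement4 (P : TireParams) (θ : ℝ) (hθ : 0 ≤ θ) (ε : ℝ) (hε : 0 ≤ ε)
    (μmin : ℝ) (hμmin : 0 < μmin) (μ1 μ2 : ℝ → ℝ)
    (hμ1c : Continuous μ1) (hμ2c : Continuous μ2)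
    (hμ1 : ∀ x, μmin ≤ μ1 x) (hμ2 : ∀ x, μmin ≤ μ2 x)
    (ω : ℝ) (hω : 0 < ω) (h1 : Assumption1 P ω)
    (h2 : Assumption2 P (Stire P.σ1 P.σ2 ε μ1 μ2)) :
    ∀ y : Vec2,
      ∃ (M M' : ℝ → Mat2) (N : Mat2),
        (IsC1MatOn01 M M' ∧
          (∀ ξ ∈ Ioo (0:ℝ) 1,
            P.Λmat * M' ξ = matODE_RHS P θ (Stire P.σ1 P.σ2 ε μ1 μ2 y) M N ξ) ∧
          M 0 = 0 ∧ (∫ ξ in (0:ℝ)..1, P.K1 ξ * M ξ) = (1 : Mat2)) ∧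
        (∀ (Mb Mb' : ℝ → Mat2) (Nb : Mat2),
          IsC1MatOn01 Mb Mb' →
          (∀ ξ ∈ Ioo (0:ℝ) 1,
            P.Λmat * Mb' ξ = matODE_RHS P θ (Stire P.σ1 P.σ2 ε μ1 μ2 y) Mb Nb ξ) →
          Mb 0 = 0 → (∫ ξ in (0:ℝ)..1, P.K1 ξ * Mb ξ) = (1 : Mat2) →
          (∀ ξ ∈ Icc (0:ℝ) 1, Mb ξ = M ξ) ∧ Nb = N) := by
  intro y
  obtain ⟨S, hS⟩ : ∃ S : Fin 2 → ℝ, Stire P.σ1 P.σ2 ε μ1 μ2 y = Matrix.diagonal S := ⟨_, rfl⟩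
  rw [hS]
  clear h1 h2 hS
  let l : Fin 2 → ℝ := fun i => P.vx / P.Li i
  have hl : ∀ i, 0 < l i := fun i => div_pos P.vx_pos (P.Li_pos i)
  let r : Fin 2 → ℝ := fun i => -(θ * S i) / l i
  let c : Fin 2 → ℝ := fun i => P.ki i * ∫ s in (0:ℝ)..1, pbar (P.ai i) s * gsol (r i) (l i) s
  have hc : ∀ i, 0 < c i := fun i => mul_pos (P.ki_pos i) (pg_pos _ (P.ai_pos i) (hl i))
  let N : Mat2 := Matrix.of fun i j => (1 : Mat2) i j / (2 * c i)
  let M : ℝ → Mat2 := fun x => Matrix.of fun i j => 2 * N i j * gsol (r i) (l i) x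
  let M' : ℝ → Mat2 := fun x => Matrix.of fun i j =>
    2 * N i j * (-r i * gsol (r i) (l i) x + 1 / l i)
  have hMd : ∀ ξ ∈ Icc (0:ℝ) 1, HasDerivWithinAt M (M' ξ) (Icc (0:ℝ) 1) ξ := by
    intro ξ _
    rw [mat_deriv]
    intro i j
    exact ((gsol_hasDerivAt (r i) (l i) ξ).const_mul (2 * N i j)).hasDerivWithinAt
  have hMc : ContinuousOn M (Icc (0:ℝ) 1) := fun x hx => (hMd x hx).continuousWithinAt
  have norm_eq : ∀ (n : ℝ) i, P.ki i * (∫ s in (0:ℝ)..1,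
      pbar (P.ai i) s * (2 * n * gsol (r i) (l i) s)) = 2 * n * c i := by
    intro n i
    have : (∫ s in (0:ℝ)..1, pbar (P.ai i) s * (2 * n * gsol (r i) (l i) s))
        = 2 * n * ∫ s in (0:ℝ)..1, pbar (P.ai i) s * gsol (r i) (l i) s := by
      rw [← intervalIntegral.integral_const_mul]; congr 1; ext s; ring
    rw [this]; ring
  refine ⟨M, M', N, ⟨⟨hMd, ?_⟩, ?_, ?_, ?_⟩, ?_⟩
  · refine Continuous.continuousOn (continuous_matrix fun i j => ?_)
    exact continuous_const.mul ((continuous_const.mul (gsol_cont _ _)).add continuous_const)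
  · intro ξ _
    ext i j
    rw [RHS_entry P θ S N ξ hMc, P.Λ_eq, Matrix.diagonal_mul]
    exact scalar_exists P.vx_pos (P.Li_pos i) (P.ai_pos i) (N i j) ξ
  · ext i j
    simp [M, gsol_zero]
  · ext i j
    rw [K1_entry P hMc]
    refine (norm_eq (N i j) i).trans ?_
    have := (hc i).ne'
    simp only [N, Matrix.of_apply]
    field_simp
  · intro Mb Mb' Nb hb hode hb0 hbn
    have hbc : ContinuousOn Mb (Icc (0:ℝ) 1) := fun x hx => (hb.1 x hx).continuousWithinAt
    have hsol : ∀ i j, ∀ ξ ∈ Icc (0:ℝ) 1, Mb ξ i j = 2 * Nb i j * gsol (r i) (l i) ξ := by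
      intro i j
      refine scalar_unique (φ := P.fi i) (m' := fun x => Mb' x i j) P.vx_pos (P.Li_pos i)
        (P.ai_pos i) (P.fi_pos i).ne'
        (fun ξ hξ => mat_deriv.1 (hb.1 ξ hξ) i j) ?_ (by rw [hb0]; rfl) ?_
      · exact ((continuous_apply j).comp (continuous_apply i)).comp_continuousOn hb.2
      · intro ξ hξ
        have := congrFun (congrFun (hode ξ hξ) i) j
        rwa [RHS_entry P θ S Nb ξ hbc, P.Λ_eq, Matrix.diagonal_mul] at this
    have hN : Nb = N := by
      ext i j
      have h := congrFun (congrFun hbn i) j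
      rw [K1_entry P hbc] at h
      have e : (∫ s in (0:ℝ)..1, pbar (P.ai i) s * Mb s i j) =
          ∫ s in (0:ℝ)..1, pbar (P.ai i) s * (2 * Nb i j * gsol (r i) (l i) s) := by
        refine intervalIntegral.integral_congr fun s hs => ?_
        rw [uIcc_of_le zero_le_one] at hs
        simp only [hsol i j s hs]
      rw [e, norm_eq] at h
      simp only [N, Matrix.of_apply]
      rw [← h]
      have := (hc i).ne'
      field_simp
    refine ⟨fun ξ hξ => ?_, hN⟩
    ext i j
    rw [hsol i j ξ hξ, hN]
    rfl
end
end

section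
/- Suppose φ₁ = φ₂ = 1 (so ψ₁ = ψ₂ = 0, K₃ ≡ 0, K₄ = 0, and (𝒜ζ)(ξ) = −Λζ′(ξ)). Set p̄_{0,i} := a_i/(1 − e^{−a_i}) and ω := min_{i∈{1,2}} v_x a_i F_{zi} σ_i p̄_{0,i} e^{−a_i}/(4 L_i). Then ω > 0 and, for every C¹ function ζ : [0,1] → ℝ² with ζ(0) = 0, ∫₀¹ (−Λζ′(ξ))ᵀ Q(ξ) ζ(ξ) dξ ≤ −ω ∫₀¹ ‖ζ(ξ)‖² dξ. In other words, Assumption 1 is satisfied when ψ₁ = ψ₂ = 0, with the explicit constant ω above. -/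
open MeasureTheory Matrix Set

noncomputable section

attribute [local instance] Matrix.normedAddCommGroup Matrix.normedSpace

lemma scalar_int (f f' : ℝ → ℝ) (a : ℝ)
    (hd : ∀ ξ ∈ Icc (0:ℝ) 1, HasDerivWithinAt f (f' ξ) (Icc (0:ℝ) 1) ξ)
    (hc : ContinuousOn f' (Icc (0:ℝ) 1)) :
    IntervalIntegrable (fun ξ => Real.exp (-a * ξ) * (f' ξ * f ξ)) volume 0 1 ∧
    IntervalIntegrable (fun ξ => Real.exp (-a * ξ) * (f ξ) ^ 2) volume 0 1 ∧
    IntervalIntegrable (fun ξ => (f ξ) ^ 2) volume 0 1 := by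
  have hf : ContinuousOn f (Icc (0:ℝ) 1) := fun x hx => (hd x hx).continuousWithinAt
  have he : ContinuousOn (fun ξ : ℝ => Real.exp (-a * ξ)) (Icc (0:ℝ) 1) := by fun_prop
  have h01 : (0:ℝ) ≤ 1 := zero_le_one
  refine ⟨?_, ?_, ?_⟩ <;> apply ContinuousOn.intervalIntegrable_of_Icc h01
  · exact he.mul (hc.mul hf)
  · exact he.mul (hf.pow 2)
  · exact hf.pow 2

lemma scalar_ineq (f f' : ℝ → ℝ) (a : ℝ) (ha : 0 < a)
    (hd : ∀ ξ ∈ Icc (0:ℝ) 1, HasDerivWithinAt f (f' ξ) (Icc (0:ℝ) 1) ξ)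
    (hc : ContinuousOn f' (Icc (0:ℝ) 1)) (h0 : f 0 = 0) :
    a / 2 * Real.exp (-a) * (∫ ξ in (0:ℝ)..1, (f ξ) ^ 2) ≤
      ∫ ξ in (0:ℝ)..1, Real.exp (-a * ξ) * (f' ξ * f ξ) := by
  obtain ⟨i1, i2, i3⟩ := scalar_int f f' a hd hc
  have hf : ContinuousOn f (Icc (0:ℝ) 1) := fun x hx => (hd x hx).continuousWithinAt
  have he : ContinuousOn (fun ξ : ℝ => Real.exp (-a * ξ)) (Icc (0:ℝ) 1) := by fun_prop
  have key := intervalIntegral.integral_eq_sub_of_hasDerivAt_of_le (a := (0:ℝ)) (b := 1)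
    (f := fun ξ => Real.exp (-a * ξ) * (f ξ) ^ 2)
    (f' := fun ξ => 2 * (Real.exp (-a * ξ) * (f' ξ * f ξ)) - a * (Real.exp (-a * ξ) * (f ξ) ^ 2))
    zero_le_one (he.mul (hf.pow 2))
    (by
      intro x hx
      have h1 : HasDerivAt f (f' x) x :=
        (hd x (Ioo_subset_Icc_self hx)).hasDerivAt (Icc_mem_nhds hx.1 hx.2)
      have h2 : HasDerivAt (fun ξ : ℝ => Real.exp (-a * ξ)) (Real.exp (-a * x) * (-a * 1)) x :=
        ((hasDerivAt_id x).const_mul (-a)).exp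
      refine (h2.mul (h1.pow 2)).congr_deriv ?_
      simp
      ring)
    ((i1.const_mul 2).sub (i2.const_mul a))
  rw [intervalIntegral.integral_sub (i1.const_mul 2) (i2.const_mul a),
    intervalIntegral.integral_const_mul, intervalIntegral.integral_const_mul] at key
  have h1 : 0 ≤ Real.exp (-a * 1) * f 1 ^ 2 := by positivity
  have h2 : Real.exp (-a) * (∫ ξ in (0:ℝ)..1, (f ξ) ^ 2) ≤
      ∫ ξ in (0:ℝ)..1, Real.exp (-a * ξ) * (f ξ) ^ 2 := by
    rw [← intervalIntegral.integral_const_mul]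
    apply intervalIntegral.integral_mono_on zero_le_one (i3.const_mul _) i2
    intro x hx
    apply mul_le_mul_of_nonneg_right _ (sq_nonneg _)
    apply Real.exp_le_exp.mpr
    nlinarith [hx.2]
  simp only [h0] at key
  nlinarith [mul_le_mul_of_nonneg_left h2 ha.le]

lemma coef_pos {v a F s L : ℝ} (hv : 0 < v) (ha : 0 < a) (hF : 0 < F) (hs : 0 < s) (hL : 0 < L) :
    0 < v / L * (F * s * (a / (1 - Real.exp (-a)))) / 2 := by
  have h : 0 < 1 - Real.exp (-a) := by
    have : Real.exp (-a) < 1 := by simpa using ha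
    linarith
  positivity

lemma Q_eq (P : TireParams) (hφ1 : P.φ1 = 1) (hφ2 : P.φ2 = 1) (ξ : ℝ) :
    P.Q ξ = Matrix.diagonal ![P.Fz1 * P.σ1 * pbar P.a1 ξ / 2, P.Fz2 * P.σ2 * pbar P.a2 ξ / 2] := by
  have hH : (P.Hmat)⁻¹ = Matrix.diagonal ![(1/2 : ℝ), 1/2] := by
    apply Matrix.inv_eq_right_inv
    ext i j
    fin_cases i <;> fin_cases j <;> simp [TireParams.Hmat, hφ1, hφ2]
  rw [TireParams.Q, hH, TireParams.K1, Matrix.diagonal_mul_diagonal]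
  congr 1
  ext i
  fin_cases i <;> simp <;> ring

/-- when `φ₁ = φ₂ = 1` (so `ψᵢ = 0`), Assumption 1 holds with the explicit
constant `ω = minᵢ vx aᵢ F_{zi} σᵢ p̄₀ᵢ e^{−aᵢ}/(4Lᵢ)`, and `(𝒜ζ)(ξ) = −Λζ'(ξ)`. -/
theorem statement5 (P : TireParams) (hφ1 : P.φ1 = 1) (hφ2 : P.φ2 = 1) :
    ∀ ω : ℝ,
      ω = min (P.vx * P.a1 * P.Fz1 * P.σ1 * (P.a1 / (1 - Real.exp (-P.a1))) *
                Real.exp (-P.a1) / (4 * P.L1))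
              (P.vx * P.a2 * P.Fz2 * P.σ2 * (P.a2 / (1 - Real.exp (-P.a2))) *
                Real.exp (-P.a2) / (4 * P.L2)) →
      0 < ω ∧
        ∀ ζ ζ' : ℝ → Vec2, IsC1On01 ζ ζ' → ζ 0 = 0 →
          (∫ ξ in (0:ℝ)..1, (-(P.Λmat).mulVec (ζ' ξ)) ⬝ᵥ (P.Q ξ).mulVec (ζ ξ)) ≤
            -ω * ∫ ξ in (0:ℝ)..1, ∑ i, (ζ ξ i) ^ 2 := by
  intro ω hω
  have c1 := coef_pos P.vx_pos P.a1_pos P.Fz1_pos P.σ1_pos P.L1_pos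
  have c2 := coef_pos P.vx_pos P.a2_pos P.Fz2_pos P.σ2_pos P.L2_pos
  set C1 := P.vx / P.L1 * (P.Fz1 * P.σ1 * (P.a1 / (1 - Real.exp (-P.a1)))) / 2 with hC1
  set C2 := P.vx / P.L2 * (P.Fz2 * P.σ2 * (P.a2 / (1 - Real.exp (-P.a2)))) / 2 with hC2
  have hω' : ω = min (C1 * (P.a1 / 2 * Real.exp (-P.a1))) (C2 * (P.a2 / 2 * Real.exp (-P.a2))) := by
    rw [hω, hC1, hC2]
    congr 1 <;> ring
  have ha1 := P.a1_pos
  have ha2 := P.a2_pos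
  clear_value C1 C2
  refine ⟨?_, ?_⟩
  · rw [hω']
    exact lt_min (by positivity) (by positivity)
  intro ζ ζ' hζ h0
  have hd : ∀ i, ∀ ξ ∈ Icc (0:ℝ) 1,
      HasDerivWithinAt (fun x => ζ x i) (ζ' ξ i) (Icc (0:ℝ) 1) ξ :=
    fun i ξ hξ => hasDerivWithinAt_pi.mp (hζ.1 ξ hξ) i
  have hc : ∀ i, ContinuousOn (fun x => ζ' x i) (Icc (0:ℝ) 1) :=
    fun i => continuousOn_pi.mp hζ.2 i
  obtain ⟨i1, -, j1⟩ := scalar_int _ _ P.a1 (hd 0) (hc 0)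
  obtain ⟨i2, -, j2⟩ := scalar_int _ _ P.a2 (hd 1) (hc 1)
  have k1 := scalar_ineq _ _ P.a1 ha1 (hd 0) (hc 0) (by simp [h0])
  have k2 := scalar_ineq _ _ P.a2 ha2 (hd 1) (hc 1) (by simp [h0])
  have e : ∀ ξ, (-(P.Λmat).mulVec (ζ' ξ)) ⬝ᵥ (P.Q ξ).mulVec (ζ ξ) =
      (-C1) * (Real.exp (-P.a1 * ξ) * (ζ' ξ 0 * ζ ξ 0)) +
      (-C2) * (Real.exp (-P.a2 * ξ) * (ζ' ξ 1 * ζ ξ 1)) := by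
    intro ξ
    rw [Q_eq P hφ1 hφ2, TireParams.Λmat, hC1, hC2]
    simp only [dotProduct, Fin.sum_univ_two, Pi.neg_apply, Matrix.mulVec_diagonal, pbar,
      Matrix.cons_val_zero, Matrix.cons_val_one]
    ring
  simp only [e, Fin.sum_univ_two]
  rw [intervalIntegral.integral_add (i1.const_mul _) (i2.const_mul _),
    intervalIntegral.integral_add j1 j2,
    intervalIntegral.integral_const_mul, intervalIntegral.integral_const_mul]
  have n1 : 0 ≤ ∫ ξ in (0:ℝ)..1, (ζ ξ 0) ^ 2 :=
    intervalIntegral.integral_nonneg zero_le_one (fun _ _ => sq_nonneg _)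
  have n2 : 0 ≤ ∫ ξ in (0:ℝ)..1, (ζ ξ 1) ^ 2 :=
    intervalIntegral.integral_nonneg zero_le_one (fun _ _ => sq_nonneg _)
  have w1 : ω ≤ C1 * (P.a1 / 2 * Real.exp (-P.a1)) := hω' ▸ min_le_left _ _
  have w2 : ω ≤ C2 * (P.a2 / 2 * Real.exp (-P.a2)) := hω' ▸ min_le_right _ _
  have m1 := mul_le_mul_of_nonneg_left k1 c1.le
  have m2 := mul_le_mul_of_nonneg_left k2 c2.le
  have p1 := mul_le_mul_of_nonneg_right w1 n1
  have p2 := mul_le_mul_of_nonneg_right w2 n2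
  linarith
end
end

section
/- Let v_x, l₁, l₂ > 0 and φ₁, φ₂ ∈ (0,1], and set A₁ := [[0, −v_x],[0, 0]], A₂ := [[1, l₁],[1, −l₂]], H := 2·diag(φ₁, φ₂). Then: (a) HA₂ is invertible; (b) the pair (A₁, HA₂) is observable, i.e., the 4×2 real matrix obtained by stacking HA₂ on top of HA₂A₁ has rank 2; and (c) for every p > 0, the gain L₁ := −(A₁ + pI₂)(HA₂)⁻¹ satisfies A₁ + L₁HA₂ = −pI₂, so there exists L₁ ∈ M₂(ℝ) such that every eigenvalue of A₁ + L₁HA₂ has negative real part (A₁ + L₁HA₂ is Hurwitz). -/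
open Matrix

noncomputable section

def A1mat (vx : ℝ) : Mat2 := !![0, -vx; 0, 0]

def A2mat (l1 l2 : ℝ) : Mat2 := !![1, l1; 1, -l2]

def Hmat2 (φ1 φ2 : ℝ) : Mat2 := (2:ℝ) • Matrix.diagonal ![φ1, φ2]

/-- A real 2×2 matrix is Hurwitz if every (complex) eigenvalue has negative real part. -/
def IsHurwitz (A : Mat2) : Prop :=
  ∀ μ : ℂ, μ ∈ spectrum ℂ (A.map (algebraMap ℝ ℂ)) → μ.re < 0

/-- (a) `HA₂` is invertible; (b) the pair `(A₁, HA₂)` is observable (the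
stacked 4×2 matrix has rank 2); (c) for every `p > 0`, `L₁ = −(A₁+pI)(HA₂)⁻¹` yields
`A₁ + L₁HA₂ = −pI`, and there exists `L₁` making `A₁ + L₁HA₂` Hurwitz. -/
theorem statement9 (vx l1 l2 φ1 φ2 : ℝ) (hvx : 0 < vx) (hl1 : 0 < l1) (hl2 : 0 < l2)
    (hφ1 : φ1 ∈ Set.Ioc (0:ℝ) 1) (hφ2 : φ2 ∈ Set.Ioc (0:ℝ) 1) :
    IsUnit (Hmat2 φ1 φ2 * A2mat l1 l2) ∧
    (Matrix.fromRows (Hmat2 φ1 φ2 * A2mat l1 l2)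
        (Hmat2 φ1 φ2 * A2mat l1 l2 * A1mat vx)).rank = 2 ∧
    (∀ p : ℝ, 0 < p →
      A1mat vx +
          (-((A1mat vx + p • (1 : Mat2)) * (Hmat2 φ1 φ2 * A2mat l1 l2)⁻¹)) *
            (Hmat2 φ1 φ2 * A2mat l1 l2) = (-p) • (1 : Mat2)) ∧
    ∃ L1 : Mat2, IsHurwitz (A1mat vx + L1 * (Hmat2 φ1 φ2 * A2mat l1 l2)) := by
  have hdet : IsUnit (Hmat2 φ1 φ2 * A2mat l1 l2).det := by
    rw [isUnit_iff_ne_zero]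
    have h1 := hφ1.1
    have h2 := hφ2.1
    have e : (Hmat2 φ1 φ2 * A2mat l1 l2).det = -(4 * φ1 * φ2 * (l1 + l2)) := by
      rw [Matrix.det_mul]
      simp [Hmat2, A2mat, Matrix.det_fin_two]
      ring
    rw [e]
    have : 0 < 4 * φ1 * φ2 * (l1 + l2) := by positivity
    linarith
  generalize Hmat2 φ1 φ2 * A2mat l1 l2 = M at hdet ⊢
  have hM : IsUnit M := (Matrix.isUnit_iff_isUnit_det M).2 hdet
  have hc : ∀ p : ℝ, 0 < p →
      A1mat vx + (-((A1mat vx + p • (1 : Mat2)) * M⁻¹)) * M = (-p) • (1 : Mat2) := by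
    intro p _
    rw [neg_mul, Matrix.mul_assoc, Matrix.nonsing_inv_mul M hdet, Matrix.mul_one, neg_smul]
    abel
  refine ⟨hM, ?_, hc, ?_⟩
  · apply le_antisymm
    · simpa using Matrix.rank_le_card_width (Matrix.fromRows M (M * A1mat vx))
    · have h1 : M.rank = 2 := by simpa using Matrix.rank_of_isUnit M hM
      have h2 : Matrix.fromCols (1 : Mat2) (0 : Mat2) *
          Matrix.fromRows M (M * A1mat vx) = M := by
        rw [Matrix.fromCols_mul_fromRows]; simp
      have h3 := Matrix.rank_mul_le_right (Matrix.fromCols (1 : Mat2) (0 : Mat2))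
        (Matrix.fromRows M (M * A1mat vx))
      rw [h2, h1] at h3
      exact h3
  · refine ⟨-((A1mat vx + (1 : ℝ) • (1 : Mat2)) * M⁻¹), ?_⟩
    · unfold IsHurwitz
      rw [hc 1 one_pos]
      intro μ hμ
      have e : (((-1 : ℝ) • (1 : Mat2)).map (algebraMap ℝ ℂ)) =
          algebraMap ℂ (Matrix (Fin 2) (Fin 2) ℂ) (-1) := by
        ext i j
        fin_cases i <;> fin_cases j <;> simp [Matrix.algebraMap_matrix_apply]
      rw [e, spectrum.scalar_eq] at hμ
      rw [Set.mem_singleton_iff.1 hμ]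
      simp
end
end

section
/- Let a, b > 0, let T ∈ (0, ∞], and let V : [0,T) → ℝ be differentiable with V(t) ≥ 0 and V′(t) ≤ −aV(t) + bV(t)^{3/2} for all t ∈ [0,T). If V(0) < (a/b)², then, with μ := a − b√(V(0)) > 0, one has V(t) ≤ V(0)·e^{−μt} for all t ∈ [0,T). -/
/-- comparison/Grönwall-type lemma: if `V ≥ 0` is differentiable on `[0,T)`
(`T ∈ (0,∞]`) with `V' ≤ −aV + bV^{3/2}` and `V(0) < (a/b)²`, then with
`μ := a − b√(V(0)) > 0` one has `V(t) ≤ V(0)e^{−μt}` on `[0,T)`. -/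
theorem statement11 (a b : ℝ) (ha : 0 < a) (hb : 0 < b) (T : EReal) (hT : 0 < T)
    (V V' : ℝ → ℝ)
    (hdiff : ∀ t : ℝ, 0 ≤ t → (t : EReal) < T →
      HasDerivWithinAt V (V' t) {s : ℝ | 0 ≤ s ∧ (s : EReal) < T} t)
    (hnonneg : ∀ t : ℝ, 0 ≤ t → (t : EReal) < T → 0 ≤ V t)
    (hineq : ∀ t : ℝ, 0 ≤ t → (t : EReal) < T →
      V' t ≤ -a * V t + b * V t ^ ((3 : ℝ) / 2))
    (hV0 : V 0 < (a / b) ^ 2) :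
    0 < a - b * Real.sqrt (V 0) ∧
      ∀ t : ℝ, 0 ≤ t → (t : EReal) < T →
        V t ≤ V 0 * Real.exp (-(a - b * Real.sqrt (V 0)) * t) := by
  have h0T : ((0 : ℝ) : EReal) < T := by simpa using hT
  have hV0n : 0 ≤ V 0 := hnonneg 0 le_rfl h0T
  have hpos : ∀ c : ℝ, c < (a / b) ^ 2 → 0 < a - b * Real.sqrt c := by
    intro c hc
    have h1 : Real.sqrt c < a / b := (Real.sqrt_lt' (by positivity)).2 hc
    rw [lt_div_iff₀ hb] at h1
    linarith
  refine ⟨hpos _ hV0, ?_⟩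
  intro t ht htT
  have hle : ∀ x : ℝ, x ≤ t → (x : EReal) < T := fun x hx =>
    lt_of_le_of_lt (EReal.coe_le_coe_iff.2 hx) htT
  have key : ∀ c : ℝ, V 0 < c → c < (a / b) ^ 2 →
      V t ≤ c * Real.exp (-(a - b * Real.sqrt c) * t) := by
    intro c hc hc2
    have hν := hpos c hc2
    have hc0 : 0 < c := lt_of_le_of_lt hV0n hc
    have hB : ∀ x : ℝ, HasDerivAt (fun x => c * Real.exp (-(a - b * Real.sqrt c) * x))
        (c * (Real.exp (-(a - b * Real.sqrt c) * x) * (-(a - b * Real.sqrt c) * 1))) x := by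
      intro x
      exact (((hasDerivAt_id x).const_mul _).exp).const_mul c
    refine image_le_of_deriv_right_lt_deriv_boundary (f := V) (f' := V') (a := 0) (b := t)
      ?_ ?_ ?_ hB ?_ ⟨ht, le_rfl⟩
    · intro x hx
      exact (hdiff x hx.1 (hle x hx.2)).continuousWithinAt.mono
        (fun y hy => ⟨hy.1, hle y hy.2⟩)
    · intro x hx
      refine (hdiff x hx.1 (hle x hx.2.le)).mono_of_mem_nhdsWithin ?_
      exact Filter.mem_of_superset (Icc_mem_nhdsGE hx.2)
        (fun y hy => ⟨hx.1.trans hy.1, hle y hy.2⟩)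
    · simpa using hc.le
    · intro x hx hVx
      have hx0 : 0 < x := by
        rcases hx.1.lt_or_eq with h | h
        · exact h
        · subst h
          simp at hVx
          linarith
      have hexp : Real.exp (-(a - b * Real.sqrt c) * x) < 1 := by
        rw [Real.exp_lt_one_iff]
        nlinarith [mul_pos hν hx0]
      have hVpos : 0 < V x := by rw [hVx]; positivity
      have hVc : V x < c := by rw [hVx]; nlinarith
      have hsq : Real.sqrt (V x) < Real.sqrt c := Real.sqrt_lt_sqrt hVpos.le hVc
      have h32 : V x ^ ((3 : ℝ) / 2) = V x * Real.sqrt (V x) := by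
        rw [Real.sqrt_eq_rpow, show (3 : ℝ) / 2 = 1 + 1 / 2 by norm_num,
          Real.rpow_add hVpos, Real.rpow_one]
      have h1 := hineq x hx.1 (hle x hx.2.le)
      rw [h32] at h1
      have h2 : c * (Real.exp (-(a - b * Real.sqrt c) * x) * (-(a - b * Real.sqrt c) * 1))
          = -(a - b * Real.sqrt c) * V x := by rw [hVx]; ring
      rw [h2]
      have h3 := mul_lt_mul_of_pos_left hsq (mul_pos hb hVpos)
      nlinarith
  have hcont : Continuous (fun c : ℝ => c * Real.exp (-(a - b * Real.sqrt c) * t)) := by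
    fun_prop
  refine ge_of_tendsto (hcont.continuousWithinAt (s := Set.Ioi (V 0)) (x := V 0)) ?_
  filter_upwards [Ioo_mem_nhdsGT hV0] with c hc
  exact key c hc.1 hc.2
end
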